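/- arXiv:2411.06763 — 4 statements merged into one kernel-verified Lean document; each statement's English description precedes it below -/
import Mathlib

section
/- Let r = (r₁, r₂) ∈ ℝ², let A = [[a,b],[c,d]] ∈ SL₂(ℤ), let z ∈ ℂ and τ ∈ ℍ. Then ϑ_{Ar}(z/(cτ+d), A·τ) · ϑ₁(z, τ) = κ(A,r) · ϑ₁(z/(cτ+d), A·τ) · ϑ_r(z, τ), where Ar denotes the matrix-vector product (ar₁+br₂, cr₁+dr₂). (This is the character part of the modular transformation law of Jacobi theta functions with characteristics: the multiplier of ϑ_{Ar}(A·(z,τ)) relative to that of ϑ₁ is exactly κ(A,r).) -/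
/-!
Both sides reduce to the transformation law of `ϑ₁` alone. Shifting the elliptic variable gives
`ϑ_r(z, τ) = -e(r₂²τ/2 + r₂(z - r₁ + 1/2)) ϑ₁(z + r₂τ - r₁, τ)` (`thetaChar_eq`), and the shifted
argument is equivariant: the point `z + r₂τ - r₁`, divided by `cτ + d`, is the shifted argument
attached to `Ar`, `z/(cτ+d)` and `A·τ`. The law
`ϑ₁(z/(cτ+d), A·τ) = χ e(cz²/(2(cτ+d))) ϑ₁(z, τ)`, with `χ` independent of `z`
(`exists_multiplier`), then expresses both sides through `ϑ₁(z, τ) ϑ₁(z + r₂τ - r₁, τ)`.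
The constant `χ` cancels, and the remaining exponentials differ by exactly `κ(A, r)`.

The law for `ϑ₁` is proved without evaluating `χ`. Matrices satisfying it for some nonzero `χ` are
closed under products (the cocycle relation for `cz²/(cτ+d)`) and inverses, so it suffices to treat
the generators `T`, where the terms of the series are compared, and `S`, where it is the functional
equation of Mathlib's `jacobiTheta₂`.
-/

open Complex

/-- `e(z) = exp(2πiz)`. -/
noncomputable def ee (z : ℂ) : ℂ := Complex.exp (2 * Real.pi * Complex.I * z)

/-- The first Jacobi theta function `ϑ₁(z,τ)`. -/
noncomputable def theta1 (z τ : ℂ) : ℂ :=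
  - ∑' n : ℤ, ee ((1/2) * ((n : ℂ) + 1/2)^2 * τ + ((n : ℂ) + 1/2) * (z + 1/2))

/-- The Jacobi theta function with characteristics `r = (r₁, r₂) ∈ ℝ²`. -/
noncomputable def thetaChar (r : ℝ × ℝ) (z τ : ℂ) : ℂ :=
  ∑' n : ℤ, ee ((1/2) * ((n : ℂ) + (r.2 : ℂ) + 1/2)^2 * τ +
    ((n : ℂ) + (r.2 : ℂ) + 1/2) * (z - (r.1 : ℂ) + 1/2))

/-- The multiplier `κ(A, r)`. -/
noncomputable def kappa (a b c d : ℤ) (r : ℝ × ℝ) : ℂ :=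
  ee ((1/2) * ((c : ℂ) * (r.1 : ℂ) + ((d : ℂ) - 1) * (r.2 : ℂ)
    - (a : ℂ) * (c : ℂ) * (r.1 : ℂ)^2
    - 2 * (b : ℂ) * (c : ℂ) * (r.1 : ℂ) * (r.2 : ℂ)
    - (b : ℂ) * (d : ℂ) * (r.2 : ℂ)^2))

open UpperHalfPlane MatrixGroups ModularGroup

/-! ### Reduction to `ϑ₁` and the generators of the modular group -/

lemma ee_add (x y : ℂ) : ee (x + y) = ee x * ee y := by
  simp only [ee, mul_add, Complex.exp_add]

lemma ee_ne_zero (x : ℂ) : ee x ≠ 0 := Complex.exp_ne_zero _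

lemma ee_int (n : ℤ) : ee n = 1 := by
  rw [ee, Complex.exp_eq_one_iff]
  exact ⟨n, by ring⟩

lemma theta1_eq_jacobiTheta₂ (z τ : ℂ) :
    theta1 z τ = - (ee (τ / 8 + (z + 1 / 2) / 2) * jacobiTheta₂ (z + 1 / 2 + τ / 2) τ) := by
  rw [theta1, jacobiTheta₂, ← tsum_mul_left]
  congr 1
  refine tsum_congr fun n => ?_
  rw [jacobiTheta₂_term, ee, ee, ← Complex.exp_add]
  congr 1
  ring

lemma thetaChar_eq (r : ℝ × ℝ) (z τ : ℂ) :
    thetaChar r z τ = - (ee ((1 / 2) * (r.2 : ℂ) ^ 2 * τ + r.2 * (z - r.1 + 1 / 2))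
      * theta1 (z + r.2 * τ - r.1) τ) := by
  rw [theta1, thetaChar, mul_neg, neg_neg, ← tsum_mul_left]
  refine tsum_congr fun n => ?_
  rw [← ee_add]
  congr 1
  ring

lemma theta1_add_one (z τ : ℂ) : theta1 z (τ + 1) = ee (1 / 8) * theta1 z τ := by
  rw [theta1, theta1, mul_neg, ← tsum_mul_left]
  congr 1
  refine tsum_congr fun n => ?_
  -- `(n + 1/2)² / 2 = n (n + 1) / 2 + 1/8`, and `n (n + 1) / 2` is an integer.
  obtain ⟨k, hk⟩ := Int.even_mul_succ_self n
  have hk' : (n : ℂ) * (n + 1) = k + k := by exact_mod_cast hk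
  refine Eq.trans ?_ (one_mul _)
  refine Eq.trans ?_ (congrArg (· * _) (ee_int k))
  rw [← ee_add, ← ee_add]
  congr 1
  linear_combination (1 / 2) * hk'

/-- The functional equation of `jacobiTheta₂` at `z + τ/2 - 1/2`, whose image under division by `τ` is
`z/τ + 1/2 + (-1/τ)/2`, the argument at which `ϑ₁(z/τ, -1/τ)` is read off. -/
lemma theta1_S {τ : ℂ} (hτ : τ ≠ 0) :
    ∃ χ : ℂ, χ ≠ 0 ∧ ∀ z, theta1 (z / τ) (-1 / τ) = χ * ee (z ^ 2 / (2 * τ)) * theta1 z τ := by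
  have hI : (-Complex.I * τ) ^ (1 / 2 : ℂ) ≠ 0 := by
    rw [Ne, Complex.cpow_eq_zero_iff]
    simp [hτ]
  refine ⟨(-Complex.I * τ) ^ (1 / 2 : ℂ) * ee (-1 / 4), mul_ne_zero hI (ee_ne_zero _), fun z => ?_⟩
  have h := jacobiTheta₂_functional_equation (z + τ / 2 - 1 / 2) τ
  have e1 : (z + τ / 2 - 1 / 2) / τ = z / τ + 1 / 2 + -1 / τ / 2 := by field_simp; ring
  rw [e1, ← jacobiTheta₂_add_left] at h
  have e2 : z + τ / 2 - 1 / 2 + 1 = z + 1 / 2 + τ / 2 := by ring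
  rw [e2] at h
  rw [theta1_eq_jacobiTheta₂, theta1_eq_jacobiTheta₂, h]
  have e3 : cexp (-Real.pi * Complex.I * (z + τ / 2 - 1 / 2) ^ 2 / τ)
      = ee (-(z + τ / 2 - 1 / 2) ^ 2 / (2 * τ)) := by
    rw [ee]; congr 1; field_simp
  have e4 : ee (-1 / τ / 8 + (z / τ + 1 / 2) / 2) = ee (-1 / 4) * ee (z ^ 2 / (2 * τ)) *
      ee (τ / 8 + (z + 1 / 2) / 2) * ee (-(z + τ / 2 - 1 / 2) ^ 2 / (2 * τ)) := by
    rw [← ee_add, ← ee_add, ← ee_add]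
    congr 1
    field_simp
    ring
  rw [e3, e4]
  field_simp

/-! ### The transformation law of `ϑ₁` under `SL(2, ℤ)` -/

/-- The automorphy factor `cτ + d`. -/
noncomputable def autFactor (γ : SL(2, ℤ)) (τ : ℍ) : ℂ := (γ 1 0 : ℂ) * τ + (γ 1 1 : ℂ)

lemma coe_smul_eq (γ : SL(2, ℤ)) (τ : ℍ) :
    ((γ • τ : ℍ) : ℂ) = ((γ 0 0 : ℂ) * τ + (γ 0 1 : ℂ)) / autFactor γ τ := by
  rw [coe_specialLinearGroup_apply]
  simp [autFactor]

lemma det_eq (γ : SL(2, ℤ)) : (γ 0 0 : ℂ) * γ 1 1 - γ 0 1 * γ 1 0 = 1 := by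
  have := Matrix.det_fin_two γ.1
  rw [γ.2] at this
  exact_mod_cast this.symm

lemma autFactor_ne_zero (γ : SL(2, ℤ)) (τ : ℍ) : autFactor γ τ ≠ 0 := by
  have h := UpperHalfPlane.denom_ne_zero (γ : GL (Fin 2) ℝ) τ
  simpa [UpperHalfPlane.denom, autFactor] using h

lemma autFactor_mul (γ δ : SL(2, ℤ)) (τ : ℍ) :
    autFactor (γ * δ) τ = autFactor γ (δ • τ) * autFactor δ τ := by
  have h := autFactor_ne_zero δ τ
  rw [autFactor, autFactor.eq_1 γ, coe_smul_eq]
  field_simp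
  simp only [autFactor, Matrix.SpecialLinearGroup.coe_mul, Matrix.mul_apply, Fin.sum_univ_two]
  push_cast
  ring

/-- `γ` transforms `ϑ₁` like a Jacobi form of index `1/2`, up to a nonzero constant that may depend
on `τ` but not on the elliptic variable. -/
def HasMultiplier (γ : SL(2, ℤ)) : Prop :=
  ∀ τ : ℍ, ∃ χ : ℂ, χ ≠ 0 ∧ ∀ z : ℂ, theta1 (z / autFactor γ τ) (γ • τ : ℍ)
    = χ * ee ((γ 1 0 : ℂ) * z ^ 2 / (2 * autFactor γ τ)) * theta1 z τ

lemma HasMultiplier.mul {γ δ : SL(2, ℤ)} (hγ : HasMultiplier γ) (hδ : HasMultiplier δ) :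
    HasMultiplier (γ * δ) := by
  intro τ
  obtain ⟨χ, hχ, h⟩ := hγ (δ • τ)
  obtain ⟨ψ, hψ, h'⟩ := hδ τ
  refine ⟨χ * ψ, mul_ne_zero hχ hψ, fun z => ?_⟩
  have n1 := autFactor_ne_zero γ (δ • τ)
  have n2 := autFactor_ne_zero δ τ
  have hz := h (z / autFactor δ τ)
  have e : ee (((γ * δ) 1 0 : ℤ) * z ^ 2 / (2 * (autFactor γ (δ • τ) * autFactor δ τ)))
      = ee ((γ 1 0 : ℂ) * (z / autFactor δ τ) ^ 2 / (2 * autFactor γ (δ • τ)))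
        * ee ((δ 1 0 : ℂ) * z ^ 2 / (2 * autFactor δ τ)) := by
    rw [← ee_add]
    congr 1
    -- The lower-left entry of a product, which makes `cz²/(cτ+d)` an additive cocycle.
    have key : (((γ * δ) 1 0 : ℤ) : ℂ) * autFactor δ τ
        = γ 1 0 + δ 1 0 * (autFactor γ (δ • τ) * autFactor δ τ) := by
      rw [← autFactor_mul]
      simp only [autFactor, Matrix.SpecialLinearGroup.coe_mul, Matrix.mul_apply, Fin.sum_univ_two]
      push_cast
      linear_combination (γ 1 0 : ℂ) * det_eq δ
    field_simp
    linear_combination z ^ 2 * key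
  rw [autFactor_mul, mul_smul, mul_comm (autFactor γ (δ • τ)), ← div_div, hz, h',
    mul_comm (autFactor δ τ), e]
  ring

lemma HasMultiplier.one : HasMultiplier 1 := by
  intro τ
  refine ⟨1, one_ne_zero, fun z => ?_⟩
  simp [autFactor, ee]

lemma HasMultiplier.inv {γ : SL(2, ℤ)} (hγ : HasMultiplier γ) : HasMultiplier γ⁻¹ := by
  intro τ
  obtain ⟨χ, hχ, h⟩ := hγ (γ⁻¹ • τ)
  refine ⟨χ⁻¹, inv_ne_zero hχ, fun z => ?_⟩
  have n2 := autFactor_ne_zero γ⁻¹ τ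
  have hJ : autFactor γ (γ⁻¹ • τ) * autFactor γ⁻¹ τ = 1 := by
    rw [← autFactor_mul]
    simp [autFactor]
  have hJ' : autFactor γ (γ⁻¹ • τ) = (autFactor γ⁻¹ τ)⁻¹ := eq_inv_of_mul_eq_one_left hJ
  have hz := h (z / autFactor γ⁻¹ τ)
  have hc : ((γ⁻¹ 1 0 : ℤ) : ℂ) = - γ 1 0 := by
    simp [Matrix.SpecialLinearGroup.SL2_inv_expl]
  have e : ee ((γ 1 0 : ℂ) * (z / autFactor γ⁻¹ τ) ^ 2 / (2 * (autFactor γ⁻¹ τ)⁻¹))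
      * ee (-(γ 1 0 : ℂ) * z ^ 2 / (2 * autFactor γ⁻¹ τ)) = 1 := by
    rw [← ee_add, ← ee_int 0]
    congr 1
    field_simp
    simp
  rw [hJ', smul_inv_smul] at hz
  rw [div_inv_eq_mul, div_mul_cancel₀ _ n2] at hz
  rw [hc, hz]
  linear_combination (-theta1 (z / autFactor γ⁻¹ τ) (γ⁻¹ • τ : ℍ)) * e
    - theta1 (z / autFactor γ⁻¹ τ) (γ⁻¹ • τ : ℍ) *
      ee ((γ 1 0 : ℂ) * (z / autFactor γ⁻¹ τ) ^ 2 / (2 * (autFactor γ⁻¹ τ)⁻¹)) *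
      ee (-(γ 1 0 : ℂ) * z ^ 2 / (2 * autFactor γ⁻¹ τ)) * inv_mul_cancel₀ hχ

lemma hasMultiplier_T : HasMultiplier T := by
  intro τ
  refine ⟨ee (1 / 8), ee_ne_zero _, fun z => ?_⟩
  have h : ((T • τ : ℍ) : ℂ) = τ + 1 := by
    rw [coe_smul_eq]
    simp [autFactor, T]
  have hJ : autFactor T τ = 1 := by simp [autFactor, T]
  have hc : ((T 1 0 : ℤ) : ℂ) = 0 := by simp [T]
  have h0 : ee 0 = 1 := by simp [ee]
  simp only [h, hJ, hc, zero_mul, zero_div, h0, div_one, mul_one, theta1_add_one]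

lemma hasMultiplier_S : HasMultiplier S := by
  intro τ
  have h : ((S • τ : ℍ) : ℂ) = -1 / τ := by
    rw [coe_smul_eq]
    simp [autFactor, S]
  have hJ : autFactor S τ = τ := by simp [autFactor, S]
  have hc : ((S 1 0 : ℤ) : ℂ) = 1 := by simp [S]
  simpa only [h, hJ, hc, one_mul] using theta1_S τ.ne_zero

lemma hasMultiplier (γ : SL(2, ℤ)) : HasMultiplier γ := by
  have hγ : γ ∈ Subgroup.closure {S, T} := by simp [SpecialLinearGroup.SL2Z_generators]
  induction hγ using Subgroup.closure_induction with
  | one => exact .one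
  | mem g hg =>
    rcases hg with rfl | rfl
    · exact hasMultiplier_S
    · exact hasMultiplier_T
  | mul g h _ _ hg hh => exact hg.mul hh
  | inv g _ hg => exact hg.inv

/-- The transformation law of `ϑ₁` in terms of matrix entries. The law holds with `χ ≠ 0`, but the
comparison of both sides of the main identity only needs that `χ` is independent of `z`. -/
lemma exists_multiplier (a b c d : ℤ) (hdet : a * d - b * c = 1) (τ : ℂ) (hτ : 0 < τ.im) :
    (c : ℂ) * τ + d ≠ 0 ∧ ∃ χ : ℂ, ∀ z : ℂ,
      theta1 (z / ((c : ℂ) * τ + d)) (((a : ℂ) * τ + b) / ((c : ℂ) * τ + d))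
        = χ * ee ((c : ℂ) * z ^ 2 / (2 * ((c : ℂ) * τ + d))) * theta1 z τ := by
  let γ : SL(2, ℤ) := ⟨!![a, b; c, d], by rw [Matrix.det_fin_two_of, hdet]⟩
  have hJ : autFactor γ ⟨τ, hτ⟩ = (c : ℂ) * τ + d := by simp [autFactor, γ]
  obtain ⟨χ, -, h⟩ := hasMultiplier γ ⟨τ, hτ⟩
  refine ⟨hJ ▸ autFactor_ne_zero γ ⟨τ, hτ⟩, χ, fun z => ?_⟩
  have := h z
  rw [coe_smul_eq, hJ] at this
  simpa [γ] using this

/-! ### The character part for general characteristics -/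

/-- Modular transformation of `ϑ_r` (character part): the multiplier of
`ϑ_{Ar}(A·(z,τ))` relative to that of `ϑ₁` is exactly `κ(A,r)`. -/
theorem thetaChar_modular_transformation
    (r : ℝ × ℝ) (a b c d : ℤ) (hdet : a * d - b * c = 1)
    (z τ : ℂ) (hτ : 0 < τ.im) :
    thetaChar ((a : ℝ) * r.1 + (b : ℝ) * r.2, (c : ℝ) * r.1 + (d : ℝ) * r.2)
        (z / ((c : ℂ) * τ + (d : ℂ))) (((a : ℂ) * τ + (b : ℂ)) / ((c : ℂ) * τ + (d : ℂ)))
      * theta1 z τ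
    = kappa a b c d r
      * theta1 (z / ((c : ℂ) * τ + (d : ℂ))) (((a : ℂ) * τ + (b : ℂ)) / ((c : ℂ) * τ + (d : ℂ)))
      * thetaChar r z τ := by
  obtain ⟨hJ, χ, h⟩ := exists_multiplier a b c d hdet τ hτ
  have hdet' : (a : ℂ) * d - b * c = 1 := by exact_mod_cast hdet
  rw [thetaChar_eq, thetaChar_eq]
  push_cast
  -- Equivariance of the shifted elliptic variable `z + r₂τ - r₁`.
  have harg : z / ((c : ℂ) * τ + d) + (c * r.1 + d * r.2) * ((a * τ + b) / (c * τ + d))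
      - (a * r.1 + b * r.2) = (z + r.2 * τ - r.1) / (c * τ + d) := by
    field_simp
    linear_combination (r.2 * τ - r.1) * hdet'
  rw [harg, h, h, kappa]
  have key : ee ((1 / 2) * ((c : ℂ) * r.1 + d * r.2) ^ 2 * ((a * τ + b) / (c * τ + d))
        + (c * r.1 + d * r.2) * (z / (c * τ + d) - (a * r.1 + b * r.2) + 1 / 2))
      * ee ((c : ℂ) * (z + r.2 * τ - r.1) ^ 2 / (2 * (c * τ + d)))
      = ee ((1 / 2) * ((c : ℂ) * (r.1 : ℂ) + ((d : ℂ) - 1) * (r.2 : ℂ)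
          - (a : ℂ) * (c : ℂ) * (r.1 : ℂ) ^ 2 - 2 * (b : ℂ) * (c : ℂ) * (r.1 : ℂ) * (r.2 : ℂ)
          - (b : ℂ) * (d : ℂ) * (r.2 : ℂ) ^ 2))
        * ee ((c : ℂ) * z ^ 2 / (2 * (c * τ + d)))
        * ee ((1 / 2) * (r.2 : ℂ) ^ 2 * τ + r.2 * (z - r.1 + 1 / 2)) := by
    rw [← ee_add, ← ee_add, ← ee_add]
    congr 1
    field_simp
    linear_combination (-c * r.1 ^ 2 - 2 * d * r.1 * r.2 + d * τ * r.2 ^ 2) * hdet'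
  linear_combination (-χ * theta1 (z + r.2 * τ - r.1) τ * theta1 z τ) * key
end

section
/- Let f, N be positive integers. If A ∈ SL₂(ℤ) satisfies A ≡ I (mod fN) entrywise, and B is a 2×2 integer matrix with det B = f, then B⁻¹AB is an integer matrix lying in SL₂(ℤ) and B⁻¹AB ≡ I (mod N) entrywise; that is, there exists C ∈ SL₂(ℤ) with C ≡ I (mod N) and AB = BC. -/
/-!
Write `A = 1 + fN • E` with `E` integral. Since `B * adj B = det B • 1 = f • 1`, the matrix
`B⁻¹AB` equals `C = 1 + N • (adj B * E * B)`: the factor `f` in the congruence absorbs the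
denominator of `B⁻¹ = f⁻¹ • adj B`. Its determinant is `1` because `det A * det B = det B * det C`
and `det B = f ≠ 0`.
-/


/-- If `A ∈ SL₂(ℤ)` with `A ≡ I (mod fN)` and `B` is an integer matrix with
`det B = f`, then there exists `C ∈ SL₂(ℤ)` with `C ≡ I (mod N)` and `AB = BC`
(i.e. `B⁻¹AB = C ∈ Γ(N)`). -/
theorem conj_congruence (f N : ℤ) (hf : 0 < f) (hN : 0 < N)
    (A B : Matrix (Fin 2) (Fin 2) ℤ) (hA : A.det = 1)
    (hAcong : ∀ i j, (f * N) ∣ (A - 1) i j) (hB : B.det = f) :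
    ∃ C : Matrix (Fin 2) (Fin 2) ℤ,
      C.det = 1 ∧ (∀ i j, N ∣ (C - 1) i j) ∧ A * B = B * C := by
  choose E hE using hAcong
  have hAE : A = 1 + (f * N) • Matrix.of E := by
    ext i j
    have h := hE i j
    rw [Matrix.sub_apply] at h
    simp only [Matrix.add_apply, Matrix.smul_apply, Matrix.of_apply, smul_eq_mul]
    linarith
  have hcomm : A * B = B * (1 + N • (B.adjugate * Matrix.of E * B)) := by
    rw [hAE, add_mul, mul_add, one_mul, mul_one, mul_smul_comm, smul_mul_assoc,
      ← mul_assoc, ← mul_assoc, Matrix.mul_adjugate, hB, smul_mul_assoc, smul_mul_assoc,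
      one_mul, smul_smul, mul_comm N f]
  refine ⟨1 + N • (B.adjugate * Matrix.of E * B), ?_, fun i j => ?_, hcomm⟩
  · have h := congrArg Matrix.det hcomm
    rw [Matrix.det_mul, Matrix.det_mul, hA, hB, one_mul] at h
    exact mul_left_cancel₀ hf.ne' (by rw [← h, mul_one])
  · rw [add_sub_cancel_left, Matrix.smul_apply, smul_eq_mul]
    exact dvd_mul_right _ _
end

section
/- Let b : ℤ → ℤ and β : ℤ → ℝ be sequences with β_i ≠ 0 and β_i = b_i − 1/β_{i+1} for all i ∈ ℤ. Let T = [[1,1],[0,1]] and S = [[0,−1],[1,0]] in SL₂(ℤ), and for integers m ≤ n define A_{m,n} := (T^{b_m}S)(T^{b_{m+1}}S)···(T^{b_{n−1}}S) (with A_{n,n} = I). Then for all m ≤ n, writing A_{m,n} = [[p,q],[u,v]], one has u·β_n + v = ∏_{i=m+1}^{n} β_i (the empty product being 1); that is, j_{A_{m,n}}(β_n) = β_{m+1}···β_n. -/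
/-!
The matrix `T^{b_m} S` equals `[[b_m, -1], [1, 0]]`, and the recursion in the form
`b_m β_{m+1} - 1 = β_m β_{m+1}` says that it maps the column `(β_{m+1}, 1)` to `β_{m+1} (β_m, 1)`.
Iterating, `A_{m,n}` maps `(β_n, 1)` to `(β_{m+1} ⋯ β_n) (β_m, 1)`, and the claim is the second
coordinate. Both coordinates must be carried through the induction, since the lower row of
`A_{m,n}` is the upper row of `A_{m+1,n}`.
-/

/-- The matrix `T = [[1,1],[0,1]]` in `SL₂(ℤ)`. -/
def Tmat : Matrix.SpecialLinearGroup (Fin 2) ℤ :=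
  ⟨!![1, 1; 0, 1], by simp [Matrix.det_fin_two_of]⟩

/-- The matrix `S = [[0,−1],[1,0]]` in `SL₂(ℤ)`. -/
def Smat : Matrix.SpecialLinearGroup (Fin 2) ℤ :=
  ⟨!![0, -1; 1, 0], by simp [Matrix.det_fin_two_of]⟩

/-- The matrix `A_{m,m+k} = (T^{b_m}S)(T^{b_{m+1}}S)···(T^{b_{m+k−1}}S)`. -/
def Amat (b : ℤ → ℤ) (m : ℤ) : ℕ → Matrix.SpecialLinearGroup (Fin 2) ℤ
  | 0 => 1
  | (k + 1) => (Tmat ^ (b m) * Smat) * Amat b (m + 1) k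

theorem coe_Tmat_zpow_mul_Smat (n : ℤ) :
    ((Tmat ^ n * Smat : Matrix.SpecialLinearGroup (Fin 2) ℤ) : Matrix (Fin 2) (Fin 2) ℤ)
      = !![n, -1; 1, 0] := by
  have hT : Tmat = ModularGroup.T := rfl
  rw [hT, Matrix.SpecialLinearGroup.coe_mul, ModularGroup.coe_T_zpow]
  simp [Smat]

/-- `A_{m,m+k}` maps the column `(β_{m+k}, 1)` to `(β_{m+1} ⋯ β_{m+k}) (β_m, 1)`,
stated coordinate by coordinate. -/
theorem Amat_apply_column (b : ℤ → ℤ) (β : ℤ → ℝ)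
    (hne : ∀ i, β i ≠ 0) (hrec : ∀ i, β i = (b i : ℝ) - 1 / β (i + 1)) (k : ℕ) (m : ℤ) :
    ((Amat b m k).1 0 0 : ℝ) * β (m + k) + ((Amat b m k).1 0 1 : ℝ)
        = β m * ∏ i ∈ Finset.range k, β (m + i + 1) ∧
      ((Amat b m k).1 1 0 : ℝ) * β (m + k) + ((Amat b m k).1 1 1 : ℝ)
        = ∏ i ∈ Finset.range k, β (m + i + 1) := by
  induction k generalizing m with
  | zero => simp [Amat]
  | succ k ih =>
    obtain ⟨h0, h1⟩ := ih (m + 1)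
    have hprod : ∏ i ∈ Finset.range (k + 1), β (m + i + 1)
        = β (m + 1) * ∏ i ∈ Finset.range k, β (m + 1 + i + 1) := by
      rw [Finset.prod_range_succ', mul_comm]
      congr 1
      · simp
      · refine Finset.prod_congr rfl fun i _ => ?_
        congr 1
        push_cast
        ring
    have hidx : m + ((k + 1 : ℕ) : ℤ) = m + 1 + k := by push_cast; ring
    have hA : (Amat b m (k + 1)).1 = !![b m, -1; 1, 0] * (Amat b (m + 1) k).1 := by
      rw [← coe_Tmat_zpow_mul_Smat]
      rfl
    have hβ : β m * β (m + 1) = b m * β (m + 1) - 1 := by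
      have hz := hne (m + 1)
      rw [hrec m]
      field_simp
    rw [hprod, hidx, hA]
    simp only [Matrix.mul_apply, Fin.sum_univ_two, Matrix.of_apply, Matrix.cons_val_zero,
      Matrix.cons_val_one, Int.cast_add, Int.cast_mul, Int.cast_neg, Int.cast_one, Int.cast_zero]
    constructor
    · linear_combination (b m : ℝ) * h0 - h1
        - (∏ i ∈ Finset.range k, β (m + 1 + i + 1)) * hβ
    · linear_combination h0

/-- If `β_i ≠ 0` and `β_i = b_i − 1/β_{i+1}` for all `i ∈ ℤ`, then the lower row of
`A_{m,n}` satisfies `u·β_n + v = β_{m+1}···β_n` (with `n = m + k`). -/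
theorem j_of_Amat_eq_prod (b : ℤ → ℤ) (β : ℤ → ℝ)
    (hne : ∀ i, β i ≠ 0) (hrec : ∀ i, β i = (b i : ℝ) - 1 / β (i + 1))
    (m : ℤ) (k : ℕ) :
    ((((Amat b m k : Matrix.SpecialLinearGroup (Fin 2) ℤ) : Matrix (Fin 2) (Fin 2) ℤ) 1 0 : ℝ))
        * β (m + k)
      + (((Amat b m k : Matrix.SpecialLinearGroup (Fin 2) ℤ) : Matrix (Fin 2) (Fin 2) ℤ) 1 1 : ℝ)
    = ∏ i ∈ Finset.range k, β (m + i + 1) := by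
  exact (Amat_apply_column b β hne hrec k m).2
end

section
/- Let k ≥ 1 and let m₁,…,m_k and n₀,n₁,…,n_k be nonnegative integers. In SL₂(ℤ) with T = [[1,1],[0,1]] and S = [[0,−1],[1,0]], set A := (T²S)^{n₀} · ∏_{i=1}^{k} [T^{m_i+3}S·(T²S)^{n_i}], C := T·S·T^{n_k+2}·S, and B := (T²S)^{m_k} · ∏_{i=1}^{k−1} [T^{n_{k−i}+3}S·(T²S)^{m_{k−i}}] · T^{n₀+n_k+3}·S (products taken left-to-right in increasing i). Then A⁻¹ = C·B·C⁻¹. (This matrix identity encodes the relation between the periodic Hirzebruch–Jung continued fraction expansions of a real quadratic number β = [overline{{2}^{n₀}, m₁+3, {2}^{n₁}, …, m_k+3, {2}^{n_k}}]₋ and of its Galois conjugate β′.) -/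
theorem Tmat_sq_mul_Smat_eq_conj :
    Tmat ^ 2 * Smat = (Tmat * Smat) * Tmat⁻¹ * (Tmat * Smat)⁻¹ := by
  decide

theorem Tmat_sq_mul_Smat_pow (n : ℕ) :
    (Tmat ^ 2 * Smat) ^ n = (Tmat * Smat) * (Tmat ^ n)⁻¹ * (Tmat * Smat)⁻¹ := by
  rw [Tmat_sq_mul_Smat_eq_conj, conj_pow, inv_pow]

/-- Inversion exchanges the two exponents of a block, up to conjugation by `T S`. -/
theorem inv_block (a b : ℕ) :
    (Tmat ^ (a + 3) * Smat * (Tmat ^ 2 * Smat) ^ b)⁻¹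
      = (Tmat * Smat) * (Tmat ^ (b + 2) * Smat * (Tmat ^ 2 * Smat) ^ a * Tmat)
        * (Tmat * Smat)⁻¹ := by
  -- `V⁻¹ T V⁻¹ = -T⁻¹` for `V = T S`, so it commutes with `T`.
  have h2 : Commute Tmat ((Tmat * Smat)⁻¹ * Tmat * (Tmat * Smat)⁻¹) := by
    unfold Commute SemiconjBy
    decide
  have h1 : (Tmat * Smat)⁻¹ * Smat⁻¹ * (Tmat ^ 3)⁻¹
      = Tmat ^ 2 * Smat * (Tmat * Smat) * ((Tmat * Smat)⁻¹ * Tmat * (Tmat * Smat)⁻¹) := by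
    decide
  have h3 := (h2.pow_left a).inv_left.eq
  rw [Tmat_sq_mul_Smat_pow, Tmat_sq_mul_Smat_pow, pow_add _ a 3, pow_add _ b 2]
  generalize Tmat ^ a = x at h3 ⊢
  generalize Tmat ^ b = y
  calc _ = Tmat * Smat * y * ((Tmat * Smat)⁻¹ * Smat⁻¹ * (Tmat ^ 3)⁻¹) * x⁻¹ := by group
    _ = Tmat * Smat * y * (Tmat ^ 2 * Smat * (Tmat * Smat))
          * (((Tmat * Smat)⁻¹ * Tmat * (Tmat * Smat)⁻¹) * x⁻¹) := by
      rw [h1]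
      simp only [mul_assoc]
    _ = _ := by
      rw [← h3]
      simp only [mul_assoc]

/-- The inverse of the word `A` of length `k + 1`, obtained by inverting it block by block. -/
theorem inv_word (k : ℕ) (m n : ℕ → ℕ) :
    ((Tmat ^ 2 * Smat) ^ (n 0)
        * ((List.range (k + 1)).map
            (fun i => Tmat ^ (m (i+1) + 3) * Smat * (Tmat^2 * Smat) ^ (n (i+1)))).prod)⁻¹
      = (Tmat * Smat * Tmat ^ (n (k + 1) + 2) * Smat)
        * ((Tmat^2 * Smat) ^ (m (k + 1))
            * ((List.range k).map
                (fun j => Tmat ^ (n (k-j) + 3) * Smat * (Tmat^2 * Smat) ^ (m (k-j)))).prod)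
        * Tmat ^ (n 0 + 1) * (Tmat * Smat)⁻¹ := by
  induction k with
  | zero =>
    simp only [zero_add, List.range_one, List.range_zero, List.map_cons, List.map_nil,
      List.prod_cons, List.prod_nil, mul_one]
    rw [mul_inv_rev, inv_block, Tmat_sq_mul_Smat_pow (n 0), pow_succ' _ (n 0)]
    group
  | succ k ih =>
    rw [List.range_succ, List.map_append, List.prod_append, List.map_singleton,
      List.prod_singleton, ← mul_assoc, mul_inv_rev, ih, inv_block,
      List.range_succ_eq_map (n := k), List.map_cons, List.map_map, List.prod_cons]
    simp only [Function.comp_def, Nat.succ_eq_add_one, Nat.add_sub_add_right, Nat.sub_zero]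
    rw [pow_succ' Tmat (n (k + 1) + 2)]
    simp only [mul_assoc, inv_mul_cancel_left, mul_inv_rev]

/-- The matrix identity `A⁻¹ = C·B·C⁻¹` encoding the relation between the periodic
Hirzebruch–Jung continued fraction expansions of a real quadratic number
`β = [overline{{2}^{n₀}, m₁+3, {2}^{n₁}, …, m_k+3, {2}^{n_k}}]₋` and of its Galois
conjugate `β′`. -/
theorem hj_conjugate_matrix_identity (k : ℕ) (hk : 1 ≤ k) (m n : ℕ → ℕ) :
    ((Tmat^2 * Smat) ^ (n 0)
        * ((List.range k).map
            (fun i => Tmat ^ (m (i+1) + 3) * Smat * (Tmat^2 * Smat) ^ (n (i+1)))).prod)⁻¹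
      = (Tmat * Smat * Tmat ^ (n k + 2) * Smat)
        * ((Tmat^2 * Smat) ^ (m k)
            * ((List.range (k-1)).map
                (fun j => Tmat ^ (n (k-1-j) + 3) * Smat * (Tmat^2 * Smat) ^ (m (k-1-j)))).prod
            * Tmat ^ (n 0 + n k + 3) * Smat)
        * (Tmat * Smat * Tmat ^ (n k + 2) * Smat)⁻¹ := by
  obtain ⟨k, rfl⟩ := Nat.exists_eq_add_of_le' hk
  rw [inv_word]
  simp only [Nat.add_sub_cancel]
  have e : n 0 + n (k + 1) + 3 = (n 0 + 1) + (n (k + 1) + 2) := by ring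
  rw [e, pow_add Tmat (n 0 + 1)]
  simp only [mul_assoc, mul_inv_rev, mul_inv_cancel_left]
end
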